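/- Let m ≥ 2 be a fixed integer and c = 1. There exist a constant K = K(m) and s0 = s0(m) such that for all s ≥ s0, with n = ms + 1 and ℓ = s − 1: if F ⊆ 2^{[n]} is a shifted family with ν(F) < s, F ⊄ Q(m,s,ℓ), and F ⊄ W(m,s,ℓ), then |2^{[n]} ∖ F| ≥ 5·C(n, m−1) − K·s^{m−2}. -/

import Mathlib

/-!
Write `m = r + 2`, `n = ms + 1`, and suppose that fewer than `5 C(n, m-1)` sets are missing from `F`.
For a suitable constant `d = d(m)`, every `m`-set inside `[n-d]` with at most one point above `n - s`
lies in `F` (`generic_mem`), since otherwise shiftedness makes at least `d C(s-d, m-1)` sets missing.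
Any subset of `[n-d]` of size `m(s-j)` can be partitioned into such sets, provided at most `s - j`
of its points are above `n - s`. Hence `F` contains no matching `P_1, …, P_j`, with `j < d`, whose
total gain `∑ (m - |P_i ∩ [n-d]|)` is at least `d - 1`: it would extend to an `s`-matching (`no_gain`).

Call an `(m-1)`-set `B ⊆ [n-d]` bad if at most four sets `B ∪ T`, with `T ⊆ (n-d, n]`, are missing.
By shiftedness (`classify`) a bad `B` satisfies one of

* `B ∈ F`;
* `B ∪ {x} ∈ F` for all `n - d < x ≤ n - 2`;
* exactly `B` and `B ∪ {n-2}`, `B ∪ {n-1}`, `B ∪ {n}` are missing over `B`.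

More than a constant times `s^(m-2)` sets of one type contain many disjoint ones, each of which
contributes gain one. In the first type, `d - 1` of these suffice. In the second,
`d - 2` of them (adding distinct singletons) fall short by one, which is supplied by a member `P` of
`F` outside `W`, compressed to `[p] ∪ T` with `p ≤ m - 1` and `T ⊆ {n-1, n}`. In the third, `d - 3`
singletons fall short by two, and a member of `F` outside `Q`, compressed to `[p] ∪ T` with
`2p + |T| < 2m` and `T ⊆ {n-2, n-1, n}`, supplies either two, or one together with a pair of the last
three points avoiding `T`. All three contradict `no_gain`, so there are `O(s^(m-2))` bad sets
(`bad_card_le`), and at least five sets are missing over every other `(m-1)`-subset of `[n-d]`.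
-/

open Finset

/-- The ground set `[n] = {1, …, n}`. -/
def ground (n : ℕ) : Finset ℕ := Finset.Icc 1 n

/-- `F` contains a matching of size `s`: `s` pairwise disjoint member sets. -/
def HasMatching (F : Finset (Finset ℕ)) (s : ℕ) : Prop :=
  ∃ M ⊆ F, M.card = s ∧ (M : Set (Finset ℕ)).PairwiseDisjoint id

/-- `A = (a₁ < … < a_k)` can be shifted to `B = (b₁ < … < b_k)`: same size and `bᵢ ≤ aᵢ`. -/
def CanShiftTo (A B : Finset ℕ) : Prop :=
  ∃ h : B.card = A.card, ∀ i : Fin A.card,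
    B.orderEmbOfFin h i ≤ A.orderEmbOfFin (rfl : A.card = A.card) i

/-- A family of subsets of the positive integers is shifted. -/
def IsShifted (F : Finset (Finset ℕ)) : Prop :=
  ∀ A ∈ F, ∀ B : Finset ℕ, 0 ∉ B → CanShiftTo A B → B ∈ F

/-- `Q(m,s,ℓ) = {P ⊆ [ms+c] : |P| + |P ∩ [ms−c−1]| ≥ 2m}` where `ℓ = s − c`. -/
def Qfam (m s c : ℕ) : Finset (Finset ℕ) :=
  (ground (m * s + c)).powerset.filter
    (fun P => 2 * m ≤ P.card + (P ∩ ground (m * s - c - 1)).card)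

/-- `W(m,s,ℓ) = {P ⊆ [ms+c] : |P ∩ [ms−1]| ≥ m}`. -/
def Wfam (m s c : ℕ) : Finset (Finset ℕ) :=
  (ground (m * s + c)).powerset.filter
    (fun P => m ≤ (P ∩ ground (m * s - 1)).card)

/-- `P(m,s,ℓ) = {P ⊆ [ms+c] : |P| + |P ∩ [ℓ−1]| ≥ m+1}` where `ℓ = s − c`. -/
def Pfam (m s c : ℕ) : Finset (Finset ℕ) :=
  (ground (m * s + c)).powerset.filter
    (fun P => m + 1 ≤ P.card + (P ∩ ground (s - c - 1)).card)

/-- `P'(m,s,ℓ) = ⋃_{i=m+1}^n ([n] choose i) ∪ ([mℓ−1] choose m)` where `ℓ = s − c`. -/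
def P'fam (m s c : ℕ) : Finset (Finset ℕ) :=
  (ground (m * s + c)).powerset.filter
    (fun P => m + 1 ≤ P.card ∨ (P.card = m ∧ P ⊆ ground (m * (s - c) - 1)))

/-- The deletion number `d(F)`: the least size of a set `X ⊆ [n]` whose removal kills
all `ℓ`-matchings in the `m`-th layer of `F`. -/
noncomputable def delNum (n m ℓ : ℕ) (F : Finset (Finset ℕ)) : ℕ :=
  sInf {d : ℕ | ∃ X ⊆ ground n, X.card = d ∧
    ¬ HasMatching (F.filter (fun A => A.card = m ∧ A ⊆ ground n \ X)) ℓ}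

/-- `y_F(i)`: the number of `i`-element subsets of `[n]` not in `F`. -/
def yF (n : ℕ) (F : Finset (Finset ℕ)) (i : ℕ) : ℕ :=
  (((ground n).powerset.filter (fun A => A.card = i)) \ F).card

/-! ### Shifting as domination -/

/-- `Dom A B`: some bijection `A → B` never increases an element. This is the order-free form of
`CanShiftTo A B`. -/
def Dom (A B : Finset ℕ) : Prop :=
  ∃ f : ℕ → ℕ, Set.BijOn f A B ∧ ∀ a ∈ A, f a ≤ a

theorem Dom.canShiftTo {A B : Finset ℕ} (h : Dom A B) : CanShiftTo A B := by
  obtain ⟨f, hf, hle⟩ := h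
  have hc : B.card = A.card := by
    have : A.image f = B := by
      apply Finset.coe_injective
      rw [Finset.coe_image]; exact hf.image_eq
    rw [← this, Finset.card_image_of_injOn hf.injOn]
  refine ⟨hc, fun i => ?_⟩
  by_contra! hlt
  set a := A.orderEmbOfFin (rfl : A.card = A.card) with ha
  set b := B.orderEmbOfFin hc with hb
  -- the `i + 1` smallest elements of `A` would inject into the `i` smallest elements of `B`
  have hmap : ∀ x ∈ (Finset.Iic i).map a.toEmbedding, f x ∈ (Finset.Iio i).map b.toEmbedding := by
    intro x hx
    rw [Finset.mem_map] at hx ⊢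
    obtain ⟨j, hj, rfl⟩ := hx
    have hjA : a j ∈ A := Finset.orderEmbOfFin_mem _ _ _
    have hfB : f (a j) ∈ B := hf.mapsTo hjA
    have hr : f (a j) ∈ Set.range b := by
      rw [hb, Finset.range_orderEmbOfFin]; exact hfB
    obtain ⟨k, hk⟩ := hr
    refine ⟨k, ?_, hk⟩
    rw [Finset.mem_Iio]
    have h1 : a j ≤ a i := a.monotone (Finset.mem_Iic.1 hj)
    have h2 := hle _ hjA
    have h3 : b k < b i := by omega
    exact b.lt_iff_lt.1 h3
  have := Finset.card_le_card_of_injOn f hmap (by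
    intro x hx y hy hxy
    have sub : ∀ z ∈ ((Finset.Iic i).map a.toEmbedding : Finset ℕ), z ∈ A := by
      intro z hz
      obtain ⟨j, hj, rfl⟩ := Finset.mem_map.1 hz
      exact Finset.orderEmbOfFin_mem _ _ _
    exact hf.injOn (sub x hx) (sub y hy) hxy)
  simp at this

theorem Dom.refl (A : Finset ℕ) : Dom A A :=
  ⟨id, Set.bijOn_id _, fun _ _ => le_rfl⟩

theorem Dom.of_le {A B : Finset ℕ} (hc : A.card = B.card) (h : ∀ a ∈ A, ∀ b ∈ B, b ≤ a) :
    Dom A B := by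
  classical
  have e : A ≃ B := Finset.equivOfCardEq hc
  have hf : Set.BijOn (fun x => if hx : x ∈ A then (e ⟨x, hx⟩ : ℕ) else 0) A B := by
    refine ⟨fun x hx => ?_, fun x hx y hy hxy => ?_, fun y hy => ?_⟩
    · have hx' : x ∈ A := hx
      simp [hx']
    · have hx' : x ∈ A := hx
      have hy' : y ∈ A := hy
      simpa [hx', hy'] using hxy
    · exact ⟨e.symm ⟨y, hy⟩, by simp, by simp⟩
  exact ⟨_, hf, fun a ha => h a ha _ (hf.mapsTo ha)⟩

theorem Dom.union {A B A' B' : Finset ℕ} (h : Dom A B) (h' : Dom A' B')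
    (hA : Disjoint A A') (hB : Disjoint B B') : Dom (A ∪ A') (B ∪ B') := by
  classical
  obtain ⟨f, hf, hl⟩ := h
  obtain ⟨g, hg, hl'⟩ := h'
  have e1 : Set.EqOn f (fun x => if x ∈ A then f x else g x) A := fun x hx => by
    have : x ∈ A := hx
    simp [this]
  have e2 : Set.EqOn g (fun x => if x ∈ A then f x else g x) A' := fun x hx => by
    have : x ∉ A := fun hh => Finset.disjoint_left.1 hA hh hx
    simp [this]
  refine ⟨fun x => if x ∈ A then f x else g x, ?_, ?_⟩
  · rw [Finset.coe_union, Finset.coe_union]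
    refine (hf.congr e1).union (hg.congr e2) ?_
    rw [Set.injOn_union (by exact_mod_cast hA)]
    refine ⟨(hf.congr e1).injOn, (hg.congr e2).injOn, fun x hx y hy hxy => ?_⟩
    have hxy : f x = g y := (e1 hx).trans (hxy.trans (e2 hy).symm)
    have h1 : f x ∈ B := hf.mapsTo hx
    have h2 : g y ∈ B' := hg.mapsTo hy
    exact disjoint_left.1 hB h1 (hxy ▸ h2)
  · intro a ha
    rcases Finset.mem_union.1 ha with h1 | h1
    · rw [← e1 h1]; exact hl a h1
    · rw [← e2 h1]; exact hl' a h1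

theorem IsShifted.mem_of_dom {F : Finset (Finset ℕ)} (hF : IsShifted F) {A B : Finset ℕ}
    (hA : A ∈ F) (h0 : 0 ∉ B) (h : Dom A B) : B ∈ F :=
  hF A hA B h0 h.canShiftTo

/-! ### Completing a partial matching by generic sets -/

/-- In an almost complete shifted family, every `(r+2)`-set avoiding the last `d` points and having
at most one of the last `s` points is present: otherwise everything above it, in particular
any `r+1` points of `(n-s, n-d]` together with one of the last `d` points, would be missing. -/
theorem generic_mem {r n s d : ℕ} {F : Finset (Finset ℕ)} (hsh : IsShifted F)
    (hsn : s ≤ n) (hds : d ≤ s)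
    (hbig : ((ground n).powerset \ F).card < d * (s - d).choose (r + 1))
    {A : Finset ℕ} (hA : A ⊆ Icc 1 (n - s)) (hAc : A.card = r + 1)
    {a : ℕ} (ha : a ∈ Icc 1 (n - d)) (haA : a ∉ A) : insert a A ∈ F := by
  classical
  by_contra hno
  apply absurd hbig
  rw [not_lt]
  have hcard : ((powersetCard (r + 1) (Ioc (n - s) (n - d))) ×ˢ (Ioc (n - d) n)).card
      = d * (s - d).choose (r + 1) := by
    rw [card_product, card_powersetCard, Nat.card_Ioc, Nat.card_Ioc, mul_comm]
    congr 2 <;> omega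
  rw [← hcard]
  apply Finset.card_le_card_of_injOn (fun p => insert p.2 p.1)
  · rintro ⟨B, x⟩ hp
    simp only [coe_product, Set.mem_prod, mem_coe, mem_powersetCard, mem_Ioc] at hp
    obtain ⟨⟨hB, hBc⟩, hx⟩ := hp
    have hBx : x ∉ B := fun h => by have := mem_Ioc.1 (hB h); omega
    simp only [mem_coe, mem_sdiff, mem_powerset]
    refine ⟨?_, fun hin => hno ?_⟩
    · intro y hy
      rw [ground, mem_Icc]
      rcases mem_insert.1 hy with rfl | hy
      · omega
      · have := mem_Ioc.1 (hB hy); omega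
    · refine hsh.mem_of_dom hin ?_ ?_
      · intro h0
        rcases mem_insert.1 h0 with h0 | h0
        · subst h0; simp at ha
        · have := hA h0; simp at this
      · rw [insert_eq, insert_eq]
        refine Dom.union (Dom.of_le rfl ?_) (Dom.of_le (hBc.trans hAc.symm) ?_) ?_ ?_
        · simp only [mem_singleton, forall_eq]
          have := mem_Icc.1 ha; omega
        · intro y hy z hz
          have := mem_Ioc.1 (hB hy)
          have := mem_Icc.1 (hA hz)
          omega
        · simpa using hBx
        · simpa using haA
  · rintro ⟨B, x⟩ hp ⟨C, y⟩ hq hpq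
    simp only [coe_product, Set.mem_prod, mem_coe, mem_powersetCard, mem_Ioc] at hp hq
    simp only at hpq
    have hlow : ∀ (B : Finset ℕ) (x : ℕ), B ⊆ Ioc (n - s) (n - d) → n - d < x →
        (insert x B).filter (· ≤ n - d) = B := by
      intro B x hB hx
      ext z
      simp only [mem_filter, mem_insert]
      constructor
      · rintro ⟨rfl | h, h'⟩
        · omega
        · exact h
      · intro h
        exact ⟨Or.inr h, (mem_Ioc.1 (hB h)).2⟩
    have hBC : B = C := by
      rw [← hlow B x hp.1.1 hp.2.1, ← hlow C y hq.1.1 hq.2.1, hpq]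
    have hx : x ∈ insert y C := by rw [← hpq]; simp
    rcases mem_insert.1 hx with h | h
    · rw [hBC, h]
    · have := mem_Ioc.1 (hq.1.1 h); omega

/-- Greedy partition into generic sets. Each part takes at most one of the points above `t`. -/
theorem greedy_partition {r t u : ℕ} {F : Finset (Finset ℕ)}
    (hgen : ∀ A ⊆ Icc 1 t, A.card = r + 1 → ∀ a ∈ Icc 1 u, a ∉ A → insert a A ∈ F) :
    ∀ (k : ℕ) (R : Finset ℕ), R ⊆ Icc 1 u → R.card = (r + 2) * k →
      (R.filter (t < ·)).card ≤ k →
      ∃ M ⊆ F, M.card = k ∧ (M : Set (Finset ℕ)).PairwiseDisjoint id ∧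
        ∀ A ∈ M, A ⊆ R ∧ A.Nonempty := by
  classical
  intro k
  induction k with
  | zero => exact fun R _ _ _ => ⟨∅, by simp, by simp, by simp, by simp⟩
  | succ k ih =>
    intro R hR hRc hhigh
    have hsplit := Finset.card_filter_add_card_filter_not (s := R) (fun x => t < x)
    obtain ⟨a, haR, hah, hlow⟩ : ∃ a ∈ R, ((R.erase a).filter (t < ·)).card ≤ k ∧
        r + 1 ≤ ((R.erase a).filter (¬ t < ·)).card := by
      rcases (R.filter (t < ·)).eq_empty_or_nonempty with he | ⟨a, ha⟩
      · have : R.Nonempty := by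
          rw [← card_pos, hRc]; positivity
        obtain ⟨a, ha⟩ := this
        refine ⟨a, ha, ?_, ?_⟩
        · rw [filter_erase, he]; simp
        · rw [filter_erase]
          have h1 := pred_card_le_card_erase (s := R.filter (¬ t < ·)) (a := a)
          rw [he, card_empty] at hsplit
          have : r + 2 ≤ (r + 2) * (k + 1) := Nat.le_mul_of_pos_right _ (by omega)
          omega
      · have ha' := mem_filter.1 ha
        refine ⟨a, ha'.1, ?_, ?_⟩
        · rw [filter_erase, card_erase_of_mem ha]; omega
        · rw [filter_erase, erase_eq_of_notMem (by simp [ha'.2])]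
          have : (r + 2) * (k + 1) = r * k + r + k + 1 + (k + 1) := by ring
          have : 0 ≤ r * k := by positivity
          omega
    obtain ⟨A, hA, hAc⟩ := exists_subset_card_eq hlow
    have hA1 : ∀ x ∈ A, x ∈ R ∧ x ≠ a ∧ x ≤ t := by
      intro x hx
      have := hA hx
      simp only [mem_filter, mem_erase, not_lt] at this
      tauto
    have haA : a ∉ A := fun h => (hA1 a h).2.1 rfl
    have hmem : insert a A ∈ F := by
      refine hgen A ?_ hAc a (hR haR) haA
      intro x hx
      have h1 := hA1 x hx
      have h2 := mem_Icc.1 (hR h1.1)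
      rw [mem_Icc]; omega
    have hsub : insert a A ⊆ R := by
      intro x hx
      rcases mem_insert.1 hx with rfl | h
      · exact haR
      · exact (hA1 x h).1
    obtain ⟨M, hMF, hMc, hMd, hMR⟩ := ih (R \ insert a A) (sdiff_subset.trans hR) (by
        rw [card_sdiff_of_subset hsub, card_insert_of_notMem haA, hAc, hRc]
        have : (r + 2) * (k + 1) = (r + 2) * k + (r + 2) := by ring
        omega) (by
        refine le_trans (card_le_card ?_) hah
        intro x hx
        simp only [mem_filter, mem_sdiff, mem_insert, mem_erase] at hx ⊢
        tauto)
    have hdis : ∀ C ∈ M, Disjoint (insert a A) C := by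
      intro C hC
      exact (disjoint_of_subset_left (hMR C hC).1 sdiff_disjoint).symm
    refine ⟨insert (insert a A) M, ?_, ?_, ?_, ?_⟩
    · exact insert_subset hmem hMF
    · rw [card_insert_of_notMem, hMc]
      intro h
      have := hdis _ h
      rw [disjoint_self_iff_empty] at this
      simp at this
    · rw [coe_insert]
      refine hMd.insert ?_
      intro C hC _
      exact hdis C hC
    · intro C hC
      rcases mem_insert.1 hC with rfl | hC
      · exact ⟨hsub, by simp⟩
      · exact ⟨(hMR C hC).1.trans sdiff_subset, (hMR C hC).2⟩

/-- A partial matching `M₀` that uses few points of `[n-d]` extends to an `s`-matching: each of its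
sets must on average spare enough points of `[n-d]` to make up for the last `d` points. -/
theorem no_gain {r n s d : ℕ} {F : Finset (Finset ℕ)}
    (hn : n = (r + 2) * s + 1) (hds : d ≤ s)
    (hgen : ∀ A ⊆ Icc 1 (n - s), A.card = r + 1 → ∀ a ∈ Icc 1 (n - d), a ∉ A → insert a A ∈ F)
    (M₀ : Finset (Finset ℕ)) (hM : M₀ ⊆ F) (hd : (M₀ : Set (Finset ℕ)).PairwiseDisjoint id)
    (hj : M₀.card + 1 ≤ d)
    (hgain : (M₀.biUnion id ∩ Icc 1 (n - d)).card + d ≤ (r + 2) * M₀.card + 1) :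
    HasMatching F s := by
  classical
  set j := M₀.card with hjdef
  have hsd : d ≤ (r + 2) * s := hds.trans (Nat.le_mul_of_pos_left _ (by omega))
  have hcore : (Icc 1 (n - d) \ M₀.biUnion id).card
      = (n - d) - (M₀.biUnion id ∩ Icc 1 (n - d)).card := by
    rw [card_sdiff, Nat.card_Icc]; simp
  have hmul : (r + 2) * (s - j) + (r + 2) * j = (r + 2) * s := by
    rw [← mul_add]; congr 1; omega
  have hle : (r + 2) * (s - j) ≤ (Icc 1 (n - d) \ M₀.biUnion id).card := by
    rw [hcore]; omega
  obtain ⟨R, hR, hRc⟩ := exists_subset_card_eq hle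
  obtain ⟨M, hMF, hMc, hMd, hMR⟩ := greedy_partition hgen (s - j) R (hR.trans sdiff_subset) hRc (by
    have : R.filter (n - s < ·) ⊆ Ioc (n - s) (n - d) := by
      intro x hx
      have h1 := mem_filter.1 hx
      have h2 := mem_Icc.1 (mem_sdiff.1 (hR h1.1)).1
      rw [mem_Ioc]; exact ⟨h1.2, h2.2⟩
    have h2 := card_le_card this
    rw [Nat.card_Ioc] at h2
    omega)
  have hdis : ∀ A ∈ M₀, ∀ B ∈ M, Disjoint A B := by
    intro A hA B hB
    rw [disjoint_right]
    intro x hx hxA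
    have := (mem_sdiff.1 (hR ((hMR B hB).1 hx))).2
    exact this (mem_biUnion.2 ⟨A, hA, hxA⟩)
  refine ⟨M₀ ∪ M, union_subset hM hMF, ?_, ?_⟩
  · rw [card_union_of_disjoint, hMc]
    · omega
    · rw [disjoint_left]
      intro A hA hA'
      have := hdis A hA A hA'
      rw [disjoint_self_iff_empty] at this
      exact (hMR A hA').2.ne_empty this
  · rw [coe_union, Set.pairwiseDisjoint_union]
    exact ⟨hd, hMd, fun A hA B hB _ => hdis A hA B hB⟩

/-! ### Disjoint members of large families -/

theorem card_hit_le (r n : ℕ) (X : Finset ℕ) :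
    ((powersetCard (r + 1) (ground n)).filter (fun B => ¬ Disjoint B X)).card
      ≤ X.card * n ^ r := by
  classical
  have hsub : (powersetCard (r + 1) (ground n)).filter (fun B => ¬ Disjoint B X)
      ⊆ X.biUnion fun v => (powersetCard r (ground n)).image (insert v) := by
    intro B hB
    rw [mem_filter, mem_powersetCard, not_disjoint_iff] at hB
    obtain ⟨⟨hB, hBc⟩, v, hv, hvX⟩ := hB
    rw [mem_biUnion]
    refine ⟨v, hvX, mem_image.2 ⟨B.erase v, ?_, insert_erase hv⟩⟩
    rw [mem_powersetCard, card_erase_of_mem hv, hBc]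
    exact ⟨(erase_subset _ _).trans hB, rfl⟩
  refine (card_le_card hsub).trans (card_biUnion_le_card_mul _ _ _ fun v _ => ?_)
  refine card_image_le.trans ?_
  rw [card_powersetCard, ground, Nat.card_Icc]
  exact (Nat.choose_le_pow _ _)

/-- A large family of `(r+1)`-sets contains many disjoint members avoiding a given small set. -/
theorem exists_disjoint_members {r n : ℕ} {G : Finset (Finset ℕ)}
    (hG : G ⊆ powersetCard (r + 1) (ground n)) :
    ∀ (k : ℕ) (X : Finset ℕ), (X.card + k * (r + 1)) * n ^ r < G.card →
      ∃ g : ℕ → Finset ℕ, (∀ i < k, g i ∈ G ∧ Disjoint (g i) X) ∧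
        ∀ i < k, ∀ j < k, i ≠ j → Disjoint (g i) (g j) := by
  classical
  intro k
  induction k with
  | zero => exact fun _ _ => ⟨fun _ => ∅, by simp, by simp⟩
  | succ k ih =>
    intro X hX
    have hex : ∃ B ∈ G, Disjoint B X := by
      by_contra! hno
      have h1 : G ⊆ (powersetCard (r + 1) (ground n)).filter (fun B => ¬ Disjoint B X) :=
        fun B hB => mem_filter.2 ⟨hG hB, hno B hB⟩
      have h2 := (card_le_card h1).trans (card_hit_le r n X)
      have h3 : X.card * n ^ r ≤ (X.card + (k + 1) * (r + 1)) * n ^ r :=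
        Nat.mul_le_mul_right _ (Nat.le_add_right _ _)
      omega
    obtain ⟨B, hBG, hBX⟩ := hex
    have hBc : B.card = r + 1 := (mem_powersetCard.1 (hG hBG)).2
    obtain ⟨g, hg, hgd⟩ := ih (X ∪ B) (by
      refine lt_of_le_of_lt (Nat.mul_le_mul_right _ ?_) hX
      have := card_union_le X B
      have : (k + 1) * (r + 1) = k * (r + 1) + (r + 1) := by ring
      omega)
    refine ⟨fun i => if i < k then g i else B, ?_, ?_⟩
    · intro i hi
      by_cases h : i < k
      · simp only [h, if_true]
        exact ⟨(hg i h).1, disjoint_of_subset_right subset_union_left (hg i h).2⟩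
      · simp only [h, if_false]
        exact ⟨hBG, hBX⟩
    · intro i hi j hj hij
      by_cases h : i < k <;> by_cases h' : j < k
      · simp only [h, h', if_true]; exact hgd i h j h' hij
      · simp only [h, h', if_true, if_false]
        exact disjoint_of_subset_right subset_union_right (hg i h).2
      · simp only [h, h', if_true, if_false]
        exact (disjoint_of_subset_right subset_union_right (hg j h').2).symm
      · omega

/-- Compressing the part of a member inside `[t]` to an initial segment. -/
theorem compress_mem {F : Finset (Finset ℕ)} (hsh : IsShifted F) {n t : ℕ} {P : Finset ℕ}
    (hP : P ∈ F) (hPn : P ⊆ ground n) :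
    Icc 1 (P ∩ Icc 1 t).card ∪ (P \ Icc 1 t) ∈ F := by
  classical
  set p := (P ∩ Icc 1 t).card with hp
  have hpt : p ≤ t := by
    have := card_le_card (inter_subset_right (s₁ := P) (s₂ := Icc 1 t))
    simpa using this
  refine hsh.mem_of_dom hP ?_ ?_
  · intro h0
    rcases mem_union.1 h0 with h | h
    · simp at h
    · have := hPn (mem_sdiff.1 h).1
      simp [ground] at this
  · have hD : Dom (P ∩ Icc 1 t) (Icc 1 p) := by
      have hc : (P ∩ Icc 1 t).card = (Icc 1 p).card := by simp [hp]
      set A := P ∩ Icc 1 t with hA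
      -- an element of rank `i` in a set of positive integers is at least `i`
      refine ⟨fun a => (A.filter (· ≤ a)).card, ?_, ?_⟩
      · have hmaps : Set.MapsTo (fun a => (A.filter (· ≤ a)).card) A (Icc 1 p) := by
          intro a ha
          have ha' : a ∈ A := ha
          rw [mem_coe, mem_Icc]
          refine ⟨card_pos.2 ⟨a, by simp [ha']⟩, card_filter_le _ _⟩
        have hinj : Set.InjOn (fun a => (A.filter (· ≤ a)).card) A := by
          have key : ∀ a ∈ A, ∀ b ∈ A, a < b →
              (A.filter (· ≤ a)).card < (A.filter (· ≤ b)).card := by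
            intro a _ b hb hab
            apply card_lt_card
            rw [ssubset_iff_of_subset (fun x hx => by
              simp only [mem_filter] at hx ⊢
              exact ⟨hx.1, by omega⟩)]
            exact ⟨b, by simp [hb], by simp [hab]⟩
          intro a ha b hb hab
          simp only at hab
          rcases lt_trichotomy a b with h | h | h
          · have := key a ha b hb h; omega
          · exact h
          · have := key b hb a ha h; omega
        refine ⟨hmaps, hinj, ?_⟩
        exact Finset.surjOn_of_injOn_of_card_le _ hmaps hinj hc.ge
      · intro a _
        have : A.filter (· ≤ a) ⊆ Icc 1 a := by
          intro x hx
          have h1 := mem_filter.1 hx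
          have h2 := mem_Icc.1 (mem_inter.1 h1.1).2
          rw [mem_Icc]; exact ⟨h2.1, h1.2⟩
        simpa using card_le_card this
    have hPP : P = (P ∩ Icc 1 t) ∪ (P \ Icc 1 t) := by
      rw [union_comm, sdiff_union_inter]
    conv => enter [1]; rw [hPP]
    refine hD.union (Dom.refl _) ?_ ?_
    · rw [disjoint_left]
      intro x hx hx'
      exact (mem_sdiff.1 hx').2 (mem_inter.1 hx).2
    · rw [disjoint_left]
      intro x hx hx'
      refine (mem_sdiff.1 hx').2 ?_
      rw [mem_Icc] at hx ⊢
      omega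

/-! ### Sets with too many extensions -/

/-- If `P` and the pairwise disjoint sets `T i` gain enough on the last `d` points, then only few
`(r+1)`-subsets `B` of `[n-d]` can have all `B ∪ T i` in `F`: otherwise disjoint such `B` would
produce an `s`-matching. -/
theorem class_bound {r n s d : ℕ} {F : Finset (Finset ℕ)}
    (hn : n = (r + 2) * s + 1) (hds : d ≤ s)
    (hgen : ∀ A ⊆ Icc 1 (n - s), A.card = r + 1 → ∀ a ∈ Icc 1 (n - d), a ∉ A → insert a A ∈ F)
    (hno : ¬ HasMatching F s) (P : Finset ℕ) (hP : P ∈ F) (hPc : P.card ≤ r + 1 + d)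
    (k : ℕ) (T : ℕ → Finset ℕ) (hT : ∀ i < k, T i ⊆ Ioc (n - d) n ∧ Disjoint (T i) P)
    (hTd : ∀ i < k, ∀ j < k, i ≠ j → Disjoint (T i) (T j))
    (hk : k + 2 ≤ d) (hgain : (P ∩ Icc 1 (n - d)).card + d ≤ r + 3 + k)
    (G : Finset (Finset ℕ)) (hG : G ⊆ powersetCard (r + 1) (Icc 1 (n - d)))
    (hGT : ∀ B ∈ G, ∀ i < k, B ∪ T i ∈ F) :
    G.card ≤ (r + 1 + d + d * (r + 1)) * n ^ r := by
  classical
  by_contra! hlt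
  have hG' : G ⊆ powersetCard (r + 1) (ground n) :=
    hG.trans (powersetCard_mono (Icc_subset_Icc_right (Nat.sub_le _ _)))
  obtain ⟨g, hg, hgd⟩ := exists_disjoint_members hG' k P (by
    refine lt_of_le_of_lt (Nat.mul_le_mul_right _ ?_) hlt
    have : k * (r + 1) ≤ d * (r + 1) := Nat.mul_le_mul_right _ (by omega)
    omega)
  have hgB : ∀ i < k, g i ⊆ Icc 1 (n - d) ∧ (g i).card = r + 1 := fun i hi =>
    mem_powersetCard.1 (hG (hg i hi).1)
  have hBT : ∀ i < k, ∀ j < k, Disjoint (g i) (T j) := by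
    intro i hi j hj
    rw [disjoint_left]
    intro x hx hx'
    have h1 := mem_Icc.1 ((hgB i hi).1 hx)
    have h2 := mem_Ioc.1 ((hT j hj).1 hx')
    omega
  have hne : ∀ i < k, (g i ∪ T i).Nonempty := by
    intro i hi
    have : (g i).Nonempty := by
      rw [← card_pos, (hgB i hi).2]; omega
    exact this.mono subset_union_left
  have hdP : ∀ i < k, Disjoint P (g i ∪ T i) := by
    intro i hi
    rw [disjoint_union_right]
    exact ⟨(hg i hi).2.symm, (hT i hi).2.symm⟩
  have hdd : ∀ i < k, ∀ j < k, i ≠ j → Disjoint (g i ∪ T i) (g j ∪ T j) := by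
    intro i hi j hj hij
    rw [disjoint_union_left, disjoint_union_right, disjoint_union_right]
    exact ⟨⟨hgd i hi j hj hij, hBT i hi j hj⟩, (hBT j hj i hi).symm, hTd i hi j hj hij⟩
  set N := (range k).image (fun i => g i ∪ T i) with hN
  have hNc : N.card = k := by
    rw [hN, card_image_of_injOn, card_range]
    intro i hi j hj hij
    by_contra hne'
    have h1 := hdd i (mem_range.1 hi) j (mem_range.1 hj) hne'
    simp only at hij
    rw [hij, disjoint_self_iff_empty] at h1
    exact (hne j (mem_range.1 hj)).ne_empty h1
  have hPN : P ∉ N := by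
    intro h
    obtain ⟨i, hi, hiP⟩ := mem_image.1 h
    have h1 := hdP i (mem_range.1 hi)
    rw [← hiP, disjoint_self_iff_empty] at h1
    exact (hne i (mem_range.1 hi)).ne_empty h1
  have hMc : (insert P N).card = k + 1 := by rw [card_insert_of_notMem hPN, hNc]
  apply hno
  refine no_gain hn hds hgen (insert P N) ?_ ?_ ?_ ?_
  · refine insert_subset hP ?_
    intro C hC
    obtain ⟨i, hi, rfl⟩ := mem_image.1 hC
    exact hGT _ (hg i (mem_range.1 hi)).1 i (mem_range.1 hi)
  · rw [coe_insert]
    refine Set.PairwiseDisjoint.insert ?_ ?_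
    · intro C hC D hD hCD
      obtain ⟨i, hi, rfl⟩ := mem_image.1 (mem_coe.1 hC)
      obtain ⟨j, hj, rfl⟩ := mem_image.1 (mem_coe.1 hD)
      exact hdd i (mem_range.1 hi) j (mem_range.1 hj) (fun h => hCD (by rw [h]))
    · intro C hC _
      obtain ⟨i, hi, rfl⟩ := mem_image.1 (mem_coe.1 hC)
      exact hdP i (mem_range.1 hi)
  · omega
  · have hsub : (insert P N).biUnion id ∩ Icc 1 (n - d)
        ⊆ (P ∩ Icc 1 (n - d)) ∪ (range k).biUnion g := by
      intro x hx
      simp only [mem_inter, mem_biUnion, mem_insert, id, mem_union] at hx ⊢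
      obtain ⟨⟨C, rfl | hC, hxC⟩, hx⟩ := hx
      · exact Or.inl ⟨hxC, hx⟩
      · obtain ⟨i, hi, rfl⟩ := mem_image.1 hC
        rcases mem_union.1 hxC with h | h
        · exact Or.inr ⟨i, hi, h⟩
        · have h1 := mem_Ioc.1 ((hT i (mem_range.1 hi)).1 h)
          have h2 := mem_Icc.1 hx
          omega
    have h1 := (card_le_card hsub).trans (card_union_le _ _)
    have h2 : ((range k).biUnion g).card ≤ k * (r + 1) := by
      have := card_biUnion_le_card_mul (range k) g (r + 1)
        (fun i hi => (hgB i (mem_range.1 hi)).2.le)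
      simpa using this
    rw [hMc]
    have : (r + 2) * (k + 1) = k * (r + 1) + (k + r + 2) := by ring
    omega

/-! ### Missing sets over a fixed trace -/

/-- The missing sets whose trace on `[n-d]` is `B`. -/
def missOver (n d : ℕ) (F : Finset (Finset ℕ)) (B : Finset ℕ) : Finset (Finset ℕ) :=
  ((ground n).powerset \ F).filter (fun C => C ∩ Icc 1 (n - d) = B)

theorem mem_missOver {n d : ℕ} {F : Finset (Finset ℕ)} {B T : Finset ℕ}
    (hB : B ⊆ Icc 1 (n - d)) (hT : T ⊆ Ioc (n - d) n) (h : B ∪ T ∉ F) :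
    B ∪ T ∈ missOver n d F B := by
  classical
  rw [missOver, mem_filter, mem_sdiff, mem_powerset]
  refine ⟨⟨?_, h⟩, ?_⟩
  · refine union_subset (hB.trans (Icc_subset_Icc_right (Nat.sub_le _ _))) (hT.trans ?_)
    intro x hx
    have := mem_Ioc.1 hx
    rw [ground, mem_Icc]; omega
  · ext x
    simp only [mem_inter, mem_union]
    constructor
    · rintro ⟨h1 | h1, h2⟩
      · exact h1
      · have := mem_Ioc.1 (hT h1)
        have := mem_Icc.1 h2
        omega
    · exact fun h1 => ⟨Or.inl h1, hB h1⟩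

/-- If at least five sets are missing over all but `O(n^r)` of the `(r+1)`-subsets of `[n-d]`, the
total number of missing sets is as claimed. -/
theorem missing_ge {r n d b : ℕ} {F : Finset (Finset ℕ)} (hdn : d ≤ n)
    (hb : ((powersetCard (r + 1) (Icc 1 (n - d))).filter
      (fun B => (missOver n d F B).card ≤ 4)).card ≤ b * n ^ r) :
    5 * n.choose (r + 1) ≤ ((ground n).powerset \ F).card + 5 * (d + b) * n ^ r := by
  classical
  set core := powersetCard (r + 1) (Icc 1 (n - d)) with hcore
  have h1 : n.choose (r + 1) ≤ core.card + d * n ^ r := by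
    have hsub : powersetCard (r + 1) (ground n) ⊆ core ∪
        (powersetCard (r + 1) (ground n)).filter (fun B => ¬ Disjoint B (Ioc (n - d) n)) := by
      intro B hB
      rw [mem_union]
      by_cases hd : Disjoint B (Ioc (n - d) n)
      · left
        rw [mem_powersetCard] at hB
        rw [hcore, mem_powersetCard]
        refine ⟨fun x hx => ?_, hB.2⟩
        have h1 := mem_Icc.1 (hB.1 hx)
        have h2 := disjoint_left.1 hd hx
        rw [mem_Ioc] at h2
        rw [mem_Icc]; omega
      · exact Or.inr (mem_filter.2 ⟨hB, hd⟩)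
    have h2 := (card_le_card hsub).trans (card_union_le _ _)
    have h3 := card_hit_le r n (Ioc (n - d) n)
    rw [card_powersetCard, ground, Nat.card_Icc] at h2
    rw [Nat.card_Ioc, Nat.sub_sub_self hdn] at h3
    simp only [Nat.add_sub_cancel] at h2
    rw [ground] at h3
    omega
  have hsplit := Finset.card_filter_add_card_filter_not (s := core)
    (fun B => (missOver n d F B).card ≤ 4)
  set good := core.filter (fun B => ¬ (missOver n d F B).card ≤ 4) with hgood
  have h4 : 5 * good.card ≤ ((ground n).powerset \ F).card := by
    have h5 : good.card * 5 ≤ (good.biUnion (missOver n d F)).card := by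
      rw [card_biUnion]
      · refine card_nsmul_le_sum good _ 5 fun B hB => ?_
        have := (mem_filter.1 hB).2
        omega
      · intro B _ C _ hBC
        refine disjoint_left.2 fun x hx hx' => ?_
        exact hBC ((mem_filter.1 hx).2.symm.trans (mem_filter.1 hx').2)
    have h6 : good.biUnion (missOver n d F) ⊆ (ground n).powerset \ F := by
      intro C hC
      obtain ⟨B, _, hB⟩ := mem_biUnion.1 hC
      exact (mem_filter.1 hB).1
    have := card_le_card h6
    omega
  have : 5 * (d + b) * n ^ r = 5 * (d * n ^ r) + 5 * (b * n ^ r) := by ring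
  omega

/-- The points above `[n-d]` that extend `B` to a member of `F` form an initial segment. -/
theorem single_mono {F : Finset (Finset ℕ)} (hsh : IsShifted F) {n d x y : ℕ} {B : Finset ℕ}
    (hB : B ⊆ Icc 1 (n - d)) (hx : n - d < x) (hxy : x ≤ y) (h : B ∪ {y} ∈ F) :
    B ∪ {x} ∈ F := by
  have hlt : ∀ z, n - d < z → z ∉ B := fun z hz hzB => by
    have := mem_Icc.1 (hB hzB); omega
  refine hsh.mem_of_dom h ?_ ?_
  · intro h0
    rcases mem_union.1 h0 with h0 | h0
    · have := mem_Icc.1 (hB h0); omega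
    · rw [mem_singleton] at h0; omega
  · refine (Dom.refl B).union (Dom.of_le rfl ?_) ?_ ?_
    · simpa using hxy
    · simpa using hlt y (by omega)
    · simpa using hlt x hx

/-- If at most four sets over `B` are missing and `∅` and `{n-2}` are among the missing extensions,
then by shiftedness `∅`, `{n-2}`, `{n-1}`, `{n}` are all of them. -/
theorem classify {F : Finset (Finset ℕ)} (hsh : IsShifted F) {n d : ℕ} (hd : 3 ≤ d) (hdn : d ≤ n)
    {B : Finset ℕ} (hB : B ⊆ Icc 1 (n - d)) (h4 : (missOver n d F B).card ≤ 4) :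
    B ∈ F ∨ (∀ x ∈ Ioc (n - d) (n - 2), B ∪ {x} ∈ F) ∨
      ∀ T ⊆ Ioc (n - d) n, T.Nonempty → T ≠ {n} → T ≠ {n - 1} → T ≠ {n - 2} → B ∪ T ∈ F := by
  classical
  by_cases h0 : B ∈ F
  · exact Or.inl h0
  by_cases h2 : B ∪ {n - 2} ∈ F
  · right; left
    intro x hx
    have := mem_Ioc.1 hx
    exact single_mono hsh hB this.1 this.2 h2
  right; right
  intro T hT hT0 hTn hT1 hT2
  by_contra hno
  have hn1 : B ∪ {n - 1} ∉ F := fun h => h2 (single_mono hsh hB (by omega) (by omega) h)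
  have hn0 : B ∪ {n} ∉ F := fun h => h2 (single_mono hsh hB (by omega) (by omega) h)
  have hsub : ({∅, {n}, {n - 1}, {n - 2}, T} : Finset (Finset ℕ)).image (B ∪ ·)
      ⊆ missOver n d F B := by
    intro C hC
    obtain ⟨S, hS, rfl⟩ := mem_image.1 hC
    simp only [mem_insert, mem_singleton] at hS
    rcases hS with rfl | rfl | rfl | rfl | rfl
    · exact mem_missOver hB (by simp) (by simpa using h0)
    · exact mem_missOver hB (by simp; omega) hn0
    · exact mem_missOver hB (by simp; omega) hn1
    · exact mem_missOver hB (by simp; omega) h2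
    · exact mem_missOver hB hT hno
  have hc5 : ({∅, {n}, {n - 1}, {n - 2}, T} : Finset (Finset ℕ)).card = 5 := by
    have e1 : n ≠ n - 1 := by omega
    have e2 : n ≠ n - 2 := by omega
    have e3 : n - 1 ≠ n - 2 := by omega
    rw [card_insert_of_notMem, card_insert_of_notMem, card_insert_of_notMem,
      card_insert_of_notMem, card_singleton]
    · simpa using hT2.symm
    · simpa [e3] using hT1.symm
    · simpa [e1, e2] using hTn.symm
    · simpa using hT0.ne_empty.symm
  have hinj : Set.InjOn (B ∪ ·) (({∅, {n}, {n - 1}, {n - 2}, T} : Finset (Finset ℕ)) : Set _) := by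
    have hall : ∀ S ∈ ({∅, {n}, {n - 1}, {n - 2}, T} : Finset (Finset ℕ)), (B ∪ S) \ B = S := by
      intro S hS
      have hSL : S ⊆ Ioc (n - d) n := by
        simp only [mem_insert, mem_singleton] at hS
        rcases hS with rfl | rfl | rfl | rfl | rfl
        · simp
        · simp; omega
        · simp; omega
        · simp; omega
        · exact hT
      rw [union_sdiff_left, Finset.sdiff_eq_self_iff_disjoint, disjoint_left]
      intro x hx hx'
      have := mem_Ioc.1 (hSL hx)
      have := mem_Icc.1 (hB hx')
      omega
    intro S hS S' hS' heq
    simp only at heq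
    rw [← hall S hS, ← hall S' hS', heq]
  have := card_le_card hsub
  rw [card_image_of_injOn hinj, hc5] at this
  omega

/-- `class_bound` for a member `P = [p] ∪ S` with `S` inside the last `d` points. -/
theorem class_bound_compressed {r n s d : ℕ} {F : Finset (Finset ℕ)}
    (hn : n = (r + 2) * s + 1) (hds : d ≤ s)
    (hgen : ∀ A ⊆ Icc 1 (n - s), A.card = r + 1 → ∀ a ∈ Icc 1 (n - d), a ∉ A → insert a A ∈ F)
    (hno : ¬ HasMatching F s) (p : ℕ) (S : Finset ℕ) (hP : Icc 1 p ∪ S ∈ F)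
    (hp : p ≤ r + 1) (hpn : p ≤ n - d) (hS : S ⊆ Ioc (n - d) n)
    (k : ℕ) (T : ℕ → Finset ℕ) (hT : ∀ i < k, T i ⊆ Ioc (n - d) n ∧ Disjoint (T i) S)
    (hTd : ∀ i < k, ∀ j < k, i ≠ j → Disjoint (T i) (T j))
    (hk : k + 2 ≤ d) (hgain : p + d ≤ r + 3 + k)
    (G : Finset (Finset ℕ)) (hG : G ⊆ powersetCard (r + 1) (Icc 1 (n - d)))
    (hGT : ∀ B ∈ G, ∀ i < k, B ∪ T i ∈ F) :
    G.card ≤ (r + 1 + d + d * (r + 1)) * n ^ r := by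
  classical
  have hSc := card_le_card hS
  rw [Nat.card_Ioc] at hSc
  refine class_bound hn hds hgen hno _ hP ?_ k T ?_ hTd hk ?_ G hG hGT
  · refine (card_union_le _ _).trans ?_
    rw [Nat.card_Icc]; omega
  · intro i hi
    refine ⟨(hT i hi).1, ?_⟩
    rw [disjoint_union_right]
    refine ⟨?_, (hT i hi).2⟩
    rw [disjoint_left]
    intro x hx hx'
    have := mem_Ioc.1 ((hT i hi).1 hx)
    have := mem_Icc.1 hx'
    omega
  · have : (Icc 1 p ∪ S) ∩ Icc 1 (n - d) ⊆ Icc 1 p := by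
      intro x hx
      rw [mem_inter, mem_union] at hx
      rcases hx.1 with h | h
      · exact h
      · have := mem_Ioc.1 (hS h)
        have := mem_Icc.1 hx.2
        omega
    have := card_le_card this
    rw [Nat.card_Icc] at this
    omega

/-! ### Counting the missing sets -/

/-- Only `O(n^r)` of the `(r+1)`-subsets of `[n-d]` have at most four missing sets over them. Sets
with few missing extensions come in three types. The first gains enough by itself, the second
together with a member of `F` outside `W`, the third together with a member of `F` outside `Q`. -/
theorem bad_card_le {r n s d : ℕ} {F : Finset (Finset ℕ)}
    (hn : n = (r + 2) * s + 1) (hds : d ≤ s) (hd : 4 ≤ d) (hrn : r + 1 ≤ n - d)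
    (hFn : F ⊆ (ground n).powerset) (hsh : IsShifted F)
    (hgen : ∀ A ⊆ Icc 1 (n - s), A.card = r + 1 → ∀ a ∈ Icc 1 (n - d), a ∉ A → insert a A ∈ F)
    (hno : ¬ HasMatching F s) (hQ : ¬ F ⊆ Qfam (r + 2) s 1) (hW : ¬ F ⊆ Wfam (r + 2) s 1) :
    ((powersetCard (r + 1) (Icc 1 (n - d))).filter
      (fun B => (missOver n d F B).card ≤ 4)).card
      ≤ 3 * (r + 1 + d + d * (r + 1)) * n ^ r := by
  classical
  set core := powersetCard (r + 1) (Icc 1 (n - d)) with hcore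
  have hdn : d ≤ n := by
    have : s ≤ (r + 2) * s := Nat.le_mul_of_pos_left _ (by omega)
    omega
  set G₁ := core.filter (fun B => B ∈ F) with hG₁
  obtain ⟨G₂, hG₂⟩ : ∃ G : Finset (Finset ℕ), ∀ B, B ∈ G ↔
      B ∈ core ∧ ∀ x ∈ Ioc (n - d) (n - 2), B ∪ {x} ∈ F :=
    ⟨core.filter (fun B => ∀ x ∈ Ioc (n - d) (n - 2), B ∪ {x} ∈ F), fun B => by simp⟩
  set G₃ := core.filter (fun B => ∀ T ⊆ Ioc (n - d) n, T.Nonempty → T ≠ {n} → T ≠ {n - 1} →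
    T ≠ {n - 2} → B ∪ T ∈ F) with hG₃
  have hsub : core.filter (fun B => (missOver n d F B).card ≤ 4) ⊆ G₁ ∪ (G₂ ∪ G₃) := by
    intro B hB
    obtain ⟨hBc, h4⟩ := mem_filter.1 hB
    rw [mem_union, mem_union, hG₁, hG₂, hG₃, mem_filter, mem_filter]
    rcases classify hsh (by omega) hdn (mem_powersetCard.1 hBc).1 h4 with h | h | h
    · exact Or.inl ⟨hBc, h⟩
    · exact Or.inr (Or.inl ⟨hBc, h⟩)
    · exact Or.inr (Or.inr ⟨hBc, h⟩)
  have b1 : G₁.card ≤ (r + 1 + d + d * (r + 1)) * n ^ r := by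
    rcases G₁.eq_empty_or_nonempty with h | ⟨P, hP⟩
    · rw [h]; simp
    obtain ⟨hPc, hPF⟩ := mem_filter.1 hP
    have hPc' := (mem_powersetCard.1 hPc).2
    refine class_bound hn hds hgen hno P hPF (by omega) (d - 2) (fun _ => ∅) (by simp) (by simp)
      (by omega) ?_ G₁ (filter_subset _ _) ?_
    · have := card_le_card (inter_subset_left (s₁ := P) (s₂ := Icc 1 (n - d)))
      omega
    · intro B hB i _
      simpa using (mem_filter.1 hB).2
  have b2 : G₂.card ≤ (r + 1 + d + d * (r + 1)) * n ^ r := by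
    obtain ⟨P, hPF, hPW⟩ := not_subset.1 hW
    have hPn := mem_powerset.1 (hFn hPF)
    have hPm : (P ∩ Icc 1 (n - 2)).card ≤ r + 1 := by
      by_contra! h
      apply hPW
      rw [Wfam, mem_filter, ← hn, ground, ground]
      refine ⟨mem_powerset.2 hPn, ?_⟩
      have : (r + 2) * s - 1 = n - 2 := by omega
      rw [this]; omega
    have hS : ∀ x ∈ P \ Icc 1 (n - 2), n - 2 < x ∧ x ≤ n := by
      intro x hx
      rw [mem_sdiff, mem_Icc] at hx
      have := mem_Icc.1 (hPn hx.1)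
      omega
    refine class_bound_compressed hn hds hgen hno _ _ (compress_mem hsh (t := n - 2) hPF hPn) hPm
      (by omega) ?_ (d - 2) (fun i => {n - d + 1 + i}) ?_ ?_ (by omega) (by omega) G₂
      (fun B hB => ((hG₂ B).1 hB).1) ?_
    · intro x hx
      have := hS x hx
      rw [mem_Ioc]; omega
    · intro i hi
      refine ⟨by simp; omega, ?_⟩
      rw [disjoint_singleton_left]
      intro h
      have := hS _ h
      omega
    · intro i _ j _ hij
      simpa using hij
    · intro B hB i hi
      exact ((hG₂ B).1 hB).2 _ (by rw [mem_Ioc]; omega)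
  have b3 : G₃.card ≤ (r + 1 + d + d * (r + 1)) * n ^ r := by
    obtain ⟨P, hPF, hPQ⟩ := not_subset.1 hQ
    have hPn := mem_powerset.1 (hFn hPF)
    have hPm : P.card + (P ∩ Icc 1 (n - 3)).card ≤ 2 * r + 3 := by
      by_contra! h
      apply hPQ
      rw [Qfam, mem_filter, ← hn, ground, ground]
      refine ⟨mem_powerset.2 hPn, ?_⟩
      have : (r + 2) * s - 1 - 1 = n - 3 := by omega
      rw [this]; omega
    have hcard := card_sdiff_add_card_inter P (Icc 1 (n - 3))
    have hmem := compress_mem hsh (t := n - 3) hPF hPn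
    set S := P \ Icc 1 (n - 3) with hSdef
    set p := (P ∩ Icc 1 (n - 3)).card with hpdef
    have hS : ∀ x ∈ S, n - 3 < x ∧ x ≤ n := by
      intro x hx
      rw [hSdef, mem_sdiff, mem_Icc] at hx
      have := mem_Icc.1 (hPn hx.1)
      omega
    have hSd : S ⊆ Ioc (n - d) n := by
      intro x hx
      have := hS x hx
      rw [mem_Ioc]; omega
    have hsingle : ∀ B ∈ G₃, ∀ i < d - 3, B ∪ {n - d + 1 + i} ∈ F := by
      intro B hB i hi
      refine (mem_filter.1 hB).2 _ (by simp; omega) (by simp) ?_ ?_ ?_ <;>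
      · rw [Ne, singleton_inj]; omega
    have hdisj : ∀ i < d - 3, n - d + 1 + i ∉ S := by
      intro i hi h
      have := hS _ h
      omega
    by_cases hS1 : S.card ≤ 1
    · -- the points of the last three outside `S` form a set of size at least two
      set U := Ioc (n - 3) n \ S with hU
      have hUc : 2 ≤ U.card := by
        have := le_card_sdiff S (Ioc (n - 3) n)
        rw [Nat.card_Ioc, ← hU] at this
        omega
      have hUm : ∀ x ∈ U, n - 3 < x ∧ x ≤ n := fun x hx => mem_Ioc.1 (mem_sdiff.1 hx).1
      have hUne : ∀ x, U ≠ {x} := by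
        intro x h
        rw [h, card_singleton] at hUc
        omega
      have hUd : ∀ i < d - 3, n - d + 1 + i ∉ U := by
        intro i hi h
        have := hUm _ h
        omega
      have hUsub : U ⊆ Ioc (n - d) n := by
        intro x hx
        have := hUm x hx
        rw [mem_Ioc]; omega
      refine class_bound_compressed hn hds hgen hno _ _ hmem (by omega)
        (by omega) hSd (d - 2) (fun i => if i < d - 3 then {n - d + 1 + i} else U)
        ?_ ?_ (by omega) (by omega) G₃ (filter_subset _ _) ?_
      · intro i hi
        by_cases h : i < d - 3
        · simp only [h, if_true]
          exact ⟨by simp; omega, by simpa using hdisj i h⟩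
        · simp only [h, if_false]
          exact ⟨hUsub, sdiff_disjoint⟩
      · intro i hi j hj hij
        by_cases h : i < d - 3 <;> by_cases h' : j < d - 3
        · simp only [h, h', if_true]; simpa using hij
        · simp only [h, h', if_true, if_false]; simpa using hUd i h
        · simp only [h, h', if_true, if_false]; simpa using hUd j h'
        · omega
      · intro B hB i hi
        by_cases h : i < d - 3
        · simp only [h, if_true]; exact hsingle B hB i h
        · simp only [h, if_false]
          exact (mem_filter.1 hB).2 U hUsub (card_pos.1 (by omega)) (hUne _) (hUne _) (hUne _)
    · -- here `p ≤ r`, so `P` itself spares one more point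
      refine class_bound_compressed hn hds hgen hno _ _ hmem (by omega)
        (by omega) hSd (d - 3) (fun i => {n - d + 1 + i}) ?_ ?_ (by omega) (by omega) G₃
        (filter_subset _ _) hsingle
      · intro i hi
        exact ⟨by simp; omega, by simpa using hdisj i hi⟩
      · intro i _ j _ hij
        simpa using hij
  have h := (card_le_card hsub).trans ((card_union_le _ _).trans
    (Nat.add_le_add_left (card_union_le _ _) _))
  have : 3 * (r + 1 + d + d * (r + 1)) * n ^ r = 3 * ((r + 1 + d + d * (r + 1)) * n ^ r) := by ring
  omega

theorem choose_compare {r n s d : ℕ} (hn : n ≤ (r + 3) * s)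
    (hd : d = 5 * (2 * (r + 3)) ^ (r + 1) * (r + 1).factorial) (hs : 2 * (d + r) ≤ s) :
    5 * n.choose (r + 1) ≤ d * (s - d).choose (r + 1) := by
  have h1 : n.choose (r + 1) ≤ ((r + 3) * s) ^ (r + 1) :=
    (Nat.choose_le_pow _ _).trans (Nat.pow_le_pow_left hn _)
  have h2 : (s - d - r) ^ (r + 1) ≤ (r + 1).factorial * (s - d).choose (r + 1) := by
    have := Nat.pow_sub_le_descFactorial (s - d) (r + 1)
    rw [Nat.descFactorial_eq_factorial_mul_choose] at this
    have e : s - d + 1 - (r + 1) = s - d - r := by omega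
    rwa [e] at this
  have h3 : s ^ (r + 1) ≤ (2 * (s - d - r)) ^ (r + 1) := Nat.pow_le_pow_left (by omega) _
  calc 5 * n.choose (r + 1) ≤ 5 * ((r + 3) * s) ^ (r + 1) := Nat.mul_le_mul_left _ h1
    _ = 5 * (r + 3) ^ (r + 1) * s ^ (r + 1) := by rw [mul_pow]; ring
    _ ≤ 5 * (r + 3) ^ (r + 1) * (2 * (s - d - r)) ^ (r + 1) := Nat.mul_le_mul_left _ h3
    _ = 5 * (2 * (r + 3)) ^ (r + 1) * (s - d - r) ^ (r + 1) := by
      rw [mul_pow, mul_pow]; ring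
    _ ≤ 5 * (2 * (r + 3)) ^ (r + 1) * ((r + 1).factorial * (s - d).choose (r + 1)) :=
      Nat.mul_le_mul_left _ h2
    _ = d * (s - d).choose (r + 1) := by rw [hd]; ring

theorem stmt_19 (m : ℕ) (hm : 2 ≤ m) :
    ∃ K s0 : ℕ, ∀ s : ℕ, s0 ≤ s →
      ∀ F : Finset (Finset ℕ), F ⊆ (ground (m * s + 1)).powerset →
        IsShifted F → ¬ HasMatching F s →
        ¬ F ⊆ Qfam m s 1 → ¬ F ⊆ Wfam m s 1 →
          5 * (m * s + 1).choose (m - 1) ≤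
            ((ground (m * s + 1)).powerset \ F).card + K * s ^ (m - 2) := by
  obtain ⟨r, rfl⟩ : ∃ r, m = r + 2 := ⟨m - 2, by omega⟩
  -- chosen so that `d * C(s - d, m - 1) ≥ 5 * C(n, m - 1)` for large `s`
  obtain ⟨d, hd⟩ : ∃ d, d = 5 * (2 * (r + 3)) ^ (r + 1) * (r + 1).factorial := ⟨_, rfl⟩
  have hd5 : 5 ≤ d := by
    rw [hd, mul_assoc]
    exact Nat.le_mul_of_pos_right _ (by positivity)
  refine ⟨5 * (d + 3 * (r + 1 + d + d * (r + 1))) * (r + 3) ^ r, 2 * (d + r) + 1, ?_⟩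
  intro s hs F hFn hsh hno hQ hW
  have e1 : r + 2 - 1 = r + 1 := by omega
  have e2 : r + 2 - 2 = r := by omega
  rw [e1, e2]
  obtain ⟨n, hn⟩ : ∃ n, n = (r + 2) * s + 1 := ⟨_, rfl⟩
  rw [← hn] at hFn ⊢
  have hn3 : n ≤ (r + 3) * s := by
    have : (r + 3) * s = (r + 2) * s + s := by ring
    omega
  have hsn : s ≤ (r + 2) * s := Nat.le_mul_of_pos_left _ (by omega)
  by_contra! hlt
  have hsmall : ((ground n).powerset \ F).card < d * (s - d).choose (r + 1) := by
    have := choose_compare hn3 hd (by omega)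
    omega
  have hgen : ∀ A ⊆ Icc 1 (n - s), A.card = r + 1 →
      ∀ a ∈ Icc 1 (n - d), a ∉ A → insert a A ∈ F :=
    fun A hA hAc a ha haA => generic_mem hsh (by omega) (by omega) hsmall hA hAc ha haA
  have hbad := bad_card_le hn (by omega) (by omega) (by omega) hFn hsh hgen hno hQ hW
  have hfin := missing_ge (by omega) hbad
  have hpow : n ^ r ≤ (r + 3) ^ r * s ^ r := by
    rw [← mul_pow]; exact Nat.pow_le_pow_left hn3 _
  have h5 := Nat.mul_le_mul_left (5 * (d + 3 * (r + 1 + d + d * (r + 1)))) hpow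
  rw [← mul_assoc] at h5
  omega
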